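/- Let (Q, Σ) be a DFA with n = |Q| satisfying hypothesis (H), and suppose there exists a word u over Σ with |Qu| ≤ n − 3. Let p₁, p₂, p₃ be pairwise distinct states, b, a, d ∈ Σ letters, and q ∈ Q∖{p₁, p₂} a state such that: Qb = Q∖{p₁}, p₁b = p₂b, Qa = Q, Qd = Q, p₁a = p₂, {p₂, p₃}a = {p₁, p₃}, p₂d = p₃, {p₁, p₃}d = {p₁, p₂}, qb ≠ p₁, and Q(badb) = Q∖{p₁, qb}. Then there exists a word w over Σ with |w| ≤ 9 and |Qw| ≤ n − 3. -/

import Mathlib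

/-- The image of a finite set of states `R` under a word (list of letters),
where each letter `s` acts on states via `act s`. -/
def wordImage {Q A : Type*} [DecidableEq Q] (act : A → Q → Q) (R : Finset Q) :
    List A → Finset Q
  | [] => R
  | s :: w => wordImage act (R.image (act s)) w


theorem wi_append {Q A : Type*} [DecidableEq Q] (act : A → Q → Q) (w : List A) (s : A) :
    ∀ R : Finset Q, wordImage act R (w ++ [s]) = (wordImage act R w).image (act s) := by
  induction w with
  | nil => intro R; rfl
  | cons t w ih => intro R; exact ih _

/-- Avoiding a finite set `T` bounds the cardinality. -/
theorem card_of_avoid {Q : Type*} [Fintype Q] [DecidableEq Q] (R T : Finset Q)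
    (h : ∀ z ∈ R, z ∉ T) : R.card ≤ Fintype.card Q - T.card := by
  rw [← Finset.card_compl]
  apply Finset.card_le_card
  intro z hz
  simpa using h z hz

/-- A map of defect at most one has at most one collapsed pair. -/
theorem kernel_unique {Q : Type*} [Fintype Q] [DecidableEq Q] (f : Q → Q)
    (hf : Fintype.card Q - 2 < (Finset.univ.image f).card) {x y z w : Q}
    (hxy : x ≠ y) (hfxy : f x = f y) (hzw : z ≠ w) (hfzw : f z = f w) :
    z = x ∨ z = y := by
  by_contra hcon
  push Not at hcon
  obtain ⟨hzx, hzy⟩ := hcon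
  have key : ∀ v u : Q, v ≠ u → z ≠ u → w ≠ u → f v = f u → z ≠ v → False := by
    intro v u hvu hzu hwu hfvu hzv
    have hsub : Finset.univ.image f ⊆ (Finset.univ \ {z, u}).image f := by
      intro t ht
      obtain ⟨m, -, rfl⟩ := Finset.mem_image.1 ht
      rw [Finset.mem_image]
      by_cases h1 : m = z
      · exact ⟨w, by simp [hzw.symm, hwu], by rw [h1, hfzw]⟩
      · by_cases h2 : m = u
        · exact ⟨v, by simp [hvu, hzv.symm], by rw [h2, hfvu]⟩
        · exact ⟨m, by simp [h1, h2], rfl⟩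
    have h1 := Finset.card_le_card hsub
    have h2 : ((Finset.univ \ {z, u}).image f).card ≤ _ := Finset.card_image_le
    have h3 : (Finset.univ \ {z, u} : Finset Q).card = Fintype.card Q - 2 := by
      rw [← Finset.compl_eq_univ_sdiff, Finset.card_compl, Finset.card_pair hzu]
    omega
  by_cases hwy : w = y
  · exact key y x hxy.symm hzx (by rw [hwy]; exact hxy.symm) hfxy.symm hzy
  · exact key x y hxy hzy hwy hfxy hzx

theorem stmt_19 {Q A : Type*} [Fintype Q] [DecidableEq Q] (act : A → Q → Q)
    (hH1 : ∃ w : List A, (wordImage act Finset.univ w).card ≤ Fintype.card Q - 2)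
    (hH2 : ∀ w : List A, w.length ≤ 3 →
      Fintype.card Q - 2 < (wordImage act Finset.univ w).card)
    (hu : ∃ u : List A, (wordImage act Finset.univ u).card ≤ Fintype.card Q - 3)
    (p₁ p₂ p₃ : Q) (hp12 : p₁ ≠ p₂) (hp13 : p₁ ≠ p₃) (hp23 : p₂ ≠ p₃)
    (b a d : A) (q : Q) (hq₁ : q ≠ p₁) (hq₂ : q ≠ p₂)
    (hb : Finset.univ.image (act b) = Finset.univ \ {p₁})
    (hb12 : act b p₁ = act b p₂)
    (ha : Finset.univ.image (act a) = Finset.univ)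
    (hd : Finset.univ.image (act d) = Finset.univ)
    (ha1 : act a p₁ = p₂)
    (ha23 : ({p₂, p₃} : Finset Q).image (act a) = {p₁, p₃})
    (hd2 : act d p₂ = p₃)
    (hd13 : ({p₁, p₃} : Finset Q).image (act d) = {p₁, p₂})
    (hqb : act b q ≠ p₁)
    (hbadb : wordImage act Finset.univ [b, a, d, b] = Finset.univ \ {p₁, act b q}) :
    ∃ w : List A, w.length ≤ 9 ∧
      (wordImage act Finset.univ w).card ≤ Fintype.card Q - 3 := by
  classical
  have hn3 : 3 ≤ Fintype.card Q := by
    have h : ({p₁, p₂, p₃} : Finset Q).card = 3 := Finset.card_eq_three.2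
      ⟨p₁, p₂, p₃, hp12, hp13, hp23, rfl⟩
    rw [← h]; exact Finset.card_le_univ _
  -- short words cannot avoid two states
  have short : ∀ w : List A, w.length ≤ 3 → ∀ x y, x ≠ y →
      (∀ z ∈ wordImage act Finset.univ w, z ≠ x ∧ z ≠ y) → False := by
    intro w hw x y hxy h
    have h1 := card_of_avoid (wordImage act Finset.univ w) {x, y} (by
      intro z hz; simpa using h z hz)
    rw [Finset.card_pair hxy] at h1
    have := hH2 w hw
    omega
  have inj_of : ∀ s : A, Finset.univ.image (act s) = Finset.univ →
      Function.Injective (act s) := by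
    intro s hs
    apply Finite.injective_iff_surjective.2
    intro y
    have : y ∈ Finset.univ.image (act s) := by rw [hs]; simp
    simpa using this
  have ainj := inj_of a ha
  have dinj := inj_of d hd
  have bker : ∀ x y, act b x = act b y → x ≠ y → (x = p₁ ∨ x = p₂) := by
    intro x y h hne
    exact kernel_unique (act b) (hH2 [b] (by simp)) hp12 hb12 hne h
  have bne : ∀ x, act b x ≠ p₁ := by
    intro x hx
    have : act b x ∈ Finset.univ.image (act b) := by simp
    rw [hb] at this
    simp [hx] at this
  -- action of a and d on P
  have ha2 : (act a p₂ = p₁ ∧ act a p₃ = p₃) ∨ (act a p₂ = p₃ ∧ act a p₃ = p₁) := by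
    have h2 : act a p₂ ∈ ({p₁, p₃} : Finset Q) := by rw [← ha23]; simp
    have h3 : act a p₃ ∈ ({p₁, p₃} : Finset Q) := by rw [← ha23]; simp
    have h4 : act a p₂ ≠ act a p₃ := fun h => hp23 (ainj h)
    simp only [Finset.mem_insert, Finset.mem_singleton] at h2 h3
    grind
  have hd1 : (act d p₁ = p₁ ∧ act d p₃ = p₂) ∨ (act d p₁ = p₂ ∧ act d p₃ = p₁) := by
    have h2 : act d p₁ ∈ ({p₁, p₂} : Finset Q) := by rw [← hd13]; simp
    have h3 : act d p₃ ∈ ({p₁, p₂} : Finset Q) := by rw [← hd13]; simp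
    have h4 : act d p₁ ≠ act d p₃ := fun h => hp13 (dinj h)
    simp only [Finset.mem_insert, Finset.mem_singleton] at h2 h3
    grind
  have aout : ∀ x, x ≠ p₁ → x ≠ p₂ → x ≠ p₃ →
      act a x ≠ p₁ ∧ act a x ≠ p₂ ∧ act a x ≠ p₃ := by
    intro x h1 h2 h3
    have e1 := fun h => h1 (@ainj x p₁ h)
    have e2 := fun h => h2 (@ainj x p₂ h)
    have e3 := fun h => h3 (@ainj x p₃ h)
    rcases ha2 with ⟨h, h'⟩ | ⟨h, h'⟩ <;> rw [ha1] at e1 <;> rw [h] at e2 <;> rw [h'] at e3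
    · exact ⟨e2, e1, e3⟩
    · exact ⟨e3, e1, e2⟩
  have dout : ∀ x, x ≠ p₁ → x ≠ p₂ → x ≠ p₃ →
      act d x ≠ p₁ ∧ act d x ≠ p₂ ∧ act d x ≠ p₃ := by
    intro x h1 h2 h3
    have e1 := fun h => h1 (@dinj x p₁ h)
    have e2 := fun h => h2 (@dinj x p₂ h)
    have e3 := fun h => h3 (@dinj x p₃ h)
    rcases hd1 with ⟨h, h'⟩ | ⟨h, h'⟩ <;> rw [hd2] at e2 <;> rw [h] at e1 <;> rw [h'] at e3
    · exact ⟨e1, e3, e2⟩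
    · exact ⟨e3, e1, e2⟩
  -- permutation letters
  have perm1 : ∀ s : A, Function.Injective (act s) → act s p₁ = p₁ ∨ act s p₁ = p₂ := by
    intro s hs
    by_contra hcon
    push Not at hcon
    refine short [b, s, b] (by simp) p₁ (act b (act s p₁)) (bne _).symm ?_
    intro z hz
    simp only [wordImage, Finset.mem_image, Finset.mem_univ, true_and] at hz
    obtain ⟨_, ⟨_, ⟨x, rfl⟩, rfl⟩, rfl⟩ := hz
    refine ⟨bne _, fun h => ?_⟩
    rcases bker _ _ h.symm (fun h' => bne x (hs h').symm) with h1 | h1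
    · exact hcon.1 h1
    · exact hcon.2 h1
  -- defect letters
  have defect : ∀ c : A, ¬ Function.Injective (act c) →
      act c p₁ = act c p₂ ∧ (∀ x y, act c x = act c y → x ≠ y → (x = p₁ ∨ x = p₂)) ∧
      (∀ x, act c x ≠ p₁) ∧ (∀ y, y ≠ p₁ → ∃ x, act c x = y) := by
    intro c hc
    have hns : ¬ Function.Surjective (act c) := fun h => hc (Finite.injective_iff_surjective.2 h)
    obtain ⟨e, he⟩ : ∃ e, ∀ x, act c x ≠ e := by
      simpa [Function.Surjective] using hns
    obtain ⟨x, y, hxy, hne⟩ : ∃ x y, act c x = act c y ∧ x ≠ y := by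
      simpa [Function.Injective] using hc
    have ker : ∀ z w, act c z = act c w → z ≠ w → (z = x ∨ z = y) := fun z w h hzw =>
      kernel_unique (act c) (hH2 [c] (by simp)) hne hxy hzw h
    have k1 : p₁ = x ∨ p₁ = y := by
      by_contra hcon
      refine short [b, c] (by simp) e (act c p₁) (he _).symm ?_
      intro z hz
      simp only [wordImage, Finset.mem_image, Finset.mem_univ, true_and] at hz
      obtain ⟨_, ⟨v, rfl⟩, rfl⟩ := hz
      exact ⟨he _, fun h => hcon (ker _ _ h.symm (bne v).symm)⟩
    have k2 : p₂ = x ∨ p₂ = y := by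
      by_contra hcon
      refine short [b, a, c] (by simp) e (act c p₂) (he _).symm ?_
      intro z hz
      simp only [wordImage, Finset.mem_image, Finset.mem_univ, true_and] at hz
      obtain ⟨_, ⟨_, ⟨v, rfl⟩, rfl⟩, rfl⟩ := hz
      refine ⟨he _, fun h => hcon (ker _ _ h.symm (fun h' => bne v ?_))⟩
      exact (ainj (ha1.trans h')).symm
    have e1 : e = p₁ ∨ e = p₂ := by
      by_contra hcon
      refine short [c, b] (by simp) p₁ (act b e) (bne _).symm ?_
      intro z hz
      simp only [wordImage, Finset.mem_image, Finset.mem_univ, true_and] at hz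
      obtain ⟨_, ⟨v, rfl⟩, rfl⟩ := hz
      exact ⟨bne _, fun h => hcon (bker _ _ h.symm (he v).symm)⟩
    have e2 : act d e = p₁ ∨ act d e = p₂ := by
      by_contra hcon
      refine short [c, d, b] (by simp) p₁ (act b (act d e)) (bne _).symm ?_
      intro z hz
      simp only [wordImage, Finset.mem_image, Finset.mem_univ, true_and] at hz
      obtain ⟨_, ⟨_, ⟨v, rfl⟩, rfl⟩, rfl⟩ := hz
      exact ⟨bne _, fun h => hcon (bker _ _ h.symm (fun h' => he v (dinj h').symm))⟩
    have e3 : e = p₁ := by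
      rcases e1 with h | h
      · exact h
      · rw [h, hd2] at e2
        rcases e2 with h' | h'
        · exact absurd h'.symm hp13
        · exact absurd h'.symm hp23
    subst e3
    refine ⟨by grind, ?_, he, ?_⟩
    · intro z w h hzw
      have := ker z w h hzw
      grind
    · intro v hv
      by_contra hcon
      push Not at hcon
      refine short [c] (by simp) e v hv.symm ?_
      intro z hz
      simp only [wordImage, Finset.mem_image, Finset.mem_univ, true_and] at hz
      obtain ⟨v, rfl⟩ := hz
      exact ⟨he _, hcon _⟩
  by_contra hcontra
  -- M k x y: two distinct states avoided by a word of length at most k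
  let M : ℕ → Q → Q → Prop := fun k x y => x ≠ y ∧ ∃ w : List A, w.length ≤ k ∧
    ∀ z ∈ wordImage act Finset.univ w, z ≠ x ∧ z ≠ y
  have Msymm : ∀ k x y, M k x y → M k y x := by
    rintro k x y ⟨h, w, hw, hz⟩
    exact ⟨h.symm, w, hw, fun z h => (hz z h).symm⟩
  have Mmono : ∀ k l x y, k ≤ l → M k x y → M l x y := by
    rintro k l x y hkl ⟨h, w, hw, hz⟩
    exact ⟨h, w, hw.trans hkl, hz⟩
  have Mperm : ∀ k x y s, Function.Injective (act s) → M k x y →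
      M (k + 1) (act s x) (act s y) := by
    rintro k x y s hs ⟨h, w, hw, hz⟩
    refine ⟨fun h' => h (hs h'), w ++ [s], by simpa using hw, ?_⟩
    intro z hz'
    rw [wi_append, Finset.mem_image] at hz'
    obtain ⟨v, hv, rfl⟩ := hz'
    exact ⟨fun h' => (hz v hv).1 (hs h'), fun h' => (hz v hv).2 (hs h')⟩
  have Mdef12 : ∀ k c, ¬ Function.Injective (act c) → M k p₁ p₂ →
      M (k + 1) p₁ (act c p₁) := by
    rintro k c hc ⟨h, w, hw, hz⟩
    obtain ⟨c12, cker, cne, -⟩ := defect c hc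
    refine ⟨(cne _).symm, w ++ [c], by simpa using hw, ?_⟩
    intro z hz'
    rw [wi_append, Finset.mem_image] at hz'
    obtain ⟨v, hv, rfl⟩ := hz'
    refine ⟨cne _, fun h' => ?_⟩
    rcases cker v p₁ h' (hz v hv).1 with h1 | h1
    · exact (hz v hv).1 h1
    · exact (hz v hv).2 h1
  have Mfin : ∀ k x y, k ≤ 8 → M k x y → x ≠ p₁ → x ≠ p₂ → y ≠ p₁ → y ≠ p₂ → False := by
    rintro k x y hk ⟨h, w, hw, hz⟩ hx1 hx2 hy1 hy2
    apply hcontra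
    refine ⟨w ++ [b], by simp; omega, ?_⟩
    have hxy : act b x ≠ act b y := fun h' => by
      rcases bker x y h' h with h1 | h1
      · exact hx1 h1
      · exact hx2 h1
    have h3 : ({p₁, act b x, act b y} : Finset Q).card = 3 := Finset.card_eq_three.2
      ⟨_, _, _, (bne x).symm, (bne y).symm, hxy, rfl⟩
    rw [← h3]
    apply card_of_avoid
    intro z hz'
    rw [wi_append, Finset.mem_image] at hz'
    obtain ⟨v, hv, rfl⟩ := hz'
    simp only [Finset.mem_insert, Finset.mem_singleton, not_or]
    refine ⟨bne _, fun h' => ?_, fun h' => ?_⟩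
    · rcases bker x v h'.symm (hz v hv).1.symm with h1 | h1
      · exact hx1 h1
      · exact hx2 h1
    · rcases bker y v h'.symm (hz v hv).2.symm with h1 | h1
      · exact hy1 h1
      · exact hy2 h1
  have Mfin2 : ∀ k y, k ≤ 7 → M k p₂ y → y ≠ p₁ → y ≠ p₂ → y ≠ p₃ → False := by
    intro k y hk hM h1 h2 h3
    have h := Mperm k _ _ d dinj hM
    rw [hd2] at h
    have h' := dout y h1 h2 h3
    exact Mfin _ _ _ (by omega) h hp13.symm hp23.symm h'.1 h'.2.1
  have Mfin1 : ∀ k y, k ≤ 6 → M k p₁ y → y ≠ p₁ → y ≠ p₂ → y ≠ p₃ → False := by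
    intro k y hk hM h1 h2 h3
    have h := Mperm k _ _ a ainj hM
    rw [ha1] at h
    have h' := aout y h1 h2 h3
    exact Mfin2 _ _ (by omega) h h'.1 h'.2.1 h'.2.2
  have base : ∀ c, ¬ Function.Injective (act c) → M 4 p₁ (act c p₃) := by
    intro c hc
    obtain ⟨c12, cker, cne, -⟩ := defect c hc
    refine ⟨(cne _).symm, [b, a, d, c], by simp, ?_⟩
    intro z hz
    simp only [wordImage, Finset.mem_image, Finset.mem_univ, true_and] at hz
    obtain ⟨_, ⟨_, ⟨_, ⟨v, rfl⟩, rfl⟩, rfl⟩, rfl⟩ := hz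
    refine ⟨cne _, fun h => ?_⟩
    rcases cker _ _ h.symm (fun h' => bne v (ainj (ha1 ▸ dinj (hd2 ▸ h'.symm)))) with h1 | h1
    · exact hp13 h1.symm
    · exact hp23 h1.symm
  have bni : ¬ Function.Injective (act b) := fun h => hp12 (h hb12)
  have r_in : ∀ c, ¬ Function.Injective (act c) → act c p₃ = p₂ ∨ act c p₃ = p₃ := by
    intro c hc
    by_contra hcon
    push Not at hcon
    exact Mfin1 4 _ (by omega) (base c hc) ((defect c hc).2.2.1 _) hcon.1 hcon.2
  have M12 : M 5 p₁ p₂ := by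
    have h := base b bni
    rcases r_in b bni with h1 | h1 <;> rw [h1] at h
    · exact Mmono _ _ _ _ (by omega) h
    · have h' := Mperm _ _ _ d dinj h
      rcases hd1 with ⟨e1, e2⟩ | ⟨e1, e2⟩ <;> rw [e1, e2] at h'
      · exact h'
      · exact Msymm _ _ _ h'
  have t_in : ∀ c, ¬ Function.Injective (act c) → act c p₁ = p₂ ∨ act c p₁ = p₃ := by
    intro c hc
    by_contra hcon
    push Not at hcon
    exact Mfin1 6 _ (by omega) (Mdef12 _ c hc M12) ((defect c hc).2.2.1 _) hcon.1 hcon.2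
  have M13 : M 5 p₁ p₃ := by
    have h := base b bni
    rcases r_in b bni with h1 | h1 <;> rw [h1] at h
    · have h' := Mdef12 _ b bni h
      rcases t_in b bni with h2 | h2
      · exfalso
        rcases bker p₃ p₁ (h1.trans h2.symm) hp13.symm with h3 | h3
        · exact hp13 h3.symm
        · exact hp23 h3.symm
      · rwa [h2] at h'
    · exact Mmono _ _ _ _ (by omega) h
  -- every letter preserves P and covers its complement
  let P : Finset Q := {p₁, p₂, p₃}
  have memP : ∀ x, x ∈ P ↔ x = p₁ ∨ x = p₂ ∨ x = p₃ := by intro x; simp [P]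
  have presP : ∀ s : A, ∀ x ∈ P, act s x ∈ P := by
    intro s
    by_cases hs : Function.Injective (act s)
    · have out : ∀ y, M 5 p₁ y → act s y ∈ P := by
        intro y hM
        by_contra hcon
        rw [memP] at hcon
        push Not at hcon
        have h := Mperm _ _ _ s hs hM
        rcases perm1 s hs with h1 | h1 <;> rw [h1] at h
        · exact Mfin1 _ _ (by omega) h hcon.1 hcon.2.1 hcon.2.2
        · exact Mfin2 _ _ (by omega) h hcon.1 hcon.2.1 hcon.2.2
      intro x hx
      rcases (memP x).1 hx with rfl | rfl | rfl
      · rw [memP]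
        rcases perm1 s hs with h1 | h1
        · exact Or.inl h1
        · exact Or.inr (Or.inl h1)
      · exact out _ M12
      · exact out _ M13
    · intro x hx
      have h1 := t_in s hs
      have h3 := r_in s hs
      have h2 := (defect s hs).1
      rw [memP]
      rcases (memP x).1 hx with rfl | rfl | rfl
      · exact Or.inr h1
      · rw [← h2]; exact Or.inr h1
      · exact Or.inr h3
  have surjP : ∀ s : A, ∀ y ∉ P, ∃ x, act s x = y := by
    intro s y hy
    by_cases hs : Function.Injective (act s)
    · exact Finite.injective_iff_surjective.1 hs y
    · refine (defect s hs).2.2.2 y (fun h => hy ?_)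
      rw [memP]; exact Or.inl h
  have inv : ∀ (w : List A) (R : Finset Q), (∀ y ∉ P, y ∈ R) → (∃ x ∈ R, x ∈ P) →
      (∀ y ∉ P, y ∈ wordImage act R w) ∧ (∃ x ∈ wordImage act R w, x ∈ P) := by
    intro w
    induction w with
    | nil => intro R h1 h2; exact ⟨h1, h2⟩
    | cons s w ih =>
      intro R h1 h2
      apply ih
      · intro y hy
        obtain ⟨x, rfl⟩ := surjP s y hy
        exact Finset.mem_image_of_mem _ (h1 x (fun hx => hy (presP s x hx)))
      · obtain ⟨x, hx, hxP⟩ := h2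
        exact ⟨_, Finset.mem_image_of_mem _ hx, presP s x hxP⟩
  obtain ⟨u, hu⟩ := hu
  obtain ⟨i1, x, hx, hxP⟩ := inv u Finset.univ (by simp) ⟨p₁, by simp, by simp [P]⟩
  have hsub : insert x Pᶜ ⊆ wordImage act Finset.univ u := by
    intro y hy
    rcases Finset.mem_insert.1 hy with rfl | hy
    · exact hx
    · exact i1 y (Finset.mem_compl.1 hy)
  have hc := Finset.card_le_card hsub
  have hP : P.card = 3 := Finset.card_eq_three.2 ⟨p₁, p₂, p₃, hp12, hp13, hp23, rfl⟩
  rw [Finset.card_insert_of_notMem (by simpa using hxP), Finset.card_compl, hP] at hc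
  omega
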